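/- Let f : ℝ² → ℝ be smooth, suppose that for every multi-index β one has ∂^β f(x) = o(|x|^{−5/2−|β|}) as |x| → ∞, and suppose ∫_{ℝ²} f dx = 0. Then the logarithmic potential u(x) = (1/2π) ∫_{ℝ²} log|x−y| f(y) dy is well-defined (the integral converges absolutely for each x), u is smooth, it satisfies Δu = f on ℝ², and u(x) = o(|x|^{−1/2}) as |x| → ∞. -/

import Mathlib

open Real Filter Asymptotics MeasureTheory

noncomputable section

/-- Partial derivative of a scalar function on ℝ² in the i-th coordinate direction. -/
def pd2 (i : Fin 2) (g : EuclideanSpace ℝ (Fin 2) → ℝ) (x : EuclideanSpace ℝ (Fin 2)) : ℝ :=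
  fderiv ℝ g x (EuclideanSpace.single i 1)

/-- The logarithmic potential u(x) = (1/2π) ∫_{ℝ²} log|x−y| f(y) dy. -/
def logPotential (f : EuclideanSpace ℝ (Fin 2) → ℝ) (x : EuclideanSpace ℝ (Fin 2)) : ℝ :=
  (2 * π)⁻¹ * ∫ y, Real.log ‖x - y‖ * f y

/-- The Euclidean plane. -/
abbrev Plane := EuclideanSpace ℝ (Fin 2)

/-- The singular part of `|log ‖y‖|`, supported in the unit ball. -/
def nearLog (y : Plane) : ℝ := (Set.Iio (1 : ℝ)).indicator (fun r => |Real.log r|) ‖y‖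

/-- A majorant of `|log ‖y‖|`: an integrable singularity plus a slowly growing term. -/
def logWeight (y : Plane) : ℝ := nearLog y + 4 * (1 + ‖y‖) ^ (1/4 : ℝ)

lemma nearLog_nonneg (y : Plane) : 0 ≤ nearLog y :=
  Set.indicator_nonneg (fun _ _ => abs_nonneg _) _

lemma integrable_nearLog : Integrable nearLog := by
  unfold nearLog
  rw [integrable_fun_norm_addHaar volume (f := (Set.Iio (1 : ℝ)).indicator fun r => |Real.log r|)]
  have h1 : IntegrableOn ((Set.Iio (1 : ℝ)).indicator fun _ => (1 : ℝ)) (Set.Ioi 0) := by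
    rw [integrableOn_indicator_iff measurableSet_Iio]
    simp [Set.Iio_inter_Ioi]
  refine Integrable.mono' h1 ?_ ?_
  · refine Measurable.aestronglyMeasurable ?_
    exact (measurable_id.pow_const _).smul
      ((Real.measurable_log.abs).indicator measurableSet_Iio)
  · refine (ae_restrict_iff' measurableSet_Ioi).2 (Eventually.of_forall fun r hr => ?_)
    rw [Set.mem_Ioi] at hr
    by_cases h : r < 1
    · have := (Real.abs_log_mul_self_lt r hr h.le).le
      rw [abs_mul, abs_of_pos hr] at this
      simpa [Set.indicator, h, abs_of_pos hr, mul_comm] using this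
    · simp [Set.indicator, h]

lemma log_le_four_mul_rpow {t : ℝ} (ht : 0 ≤ t) : Real.log t ≤ 4 * t ^ (1/4 : ℝ) := by
  have := Real.log_le_rpow_div ht (ε := 1/4) (by norm_num)
  linarith

lemma abs_log_norm_le_logWeight (y : Plane) : |Real.log ‖y‖| ≤ logWeight y := by
  unfold logWeight
  have h0 : 0 ≤ (1 + ‖y‖) ^ (1/4 : ℝ) := by positivity
  by_cases h : ‖y‖ < 1
  · simp only [nearLog, Set.indicator, Set.mem_Iio, h, if_true]
    linarith
  · have h2 := log_le_four_mul_rpow (norm_nonneg y)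
    have h3 : ‖y‖ ^ (1/4 : ℝ) ≤ (1 + ‖y‖) ^ (1/4 : ℝ) := by gcongr; linarith
    rw [abs_of_nonneg (Real.log_nonneg (not_lt.1 h))]
    linarith [nearLog_nonneg y]

lemma one_le_logWeight (y : Plane) : 1 ≤ logWeight y := by
  have : (1 : ℝ) ≤ (1 + ‖y‖) ^ (1/4 : ℝ) :=
    Real.one_le_rpow (by linarith [norm_nonneg y]) (by norm_num)
  unfold logWeight
  linarith [nearLog_nonneg y]

lemma measurable_logWeight : Measurable logWeight := by
  unfold logWeight nearLog
  refine Measurable.add ?_ (by fun_prop)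
  exact ((Real.measurable_log.abs).indicator measurableSet_Iio).comp measurable_norm

lemma finrank_plane : (Module.finrank ℝ Plane : ℝ) = 2 := by simp

lemma integrable_one_add_norm_sub (x : Plane) {r : ℝ} (hr : 2 < r) :
    Integrable fun y : Plane => (1 + ‖x - y‖) ^ (-r) :=
  (integrable_one_add_norm (μ := (volume : Measure Plane))
    (by rw [finrank_plane]; exact hr)).comp_sub_left x

lemma one_add_norm_le_mul (x y : Plane) : 1 + ‖y‖ ≤ (1 + ‖x‖) * (1 + ‖x - y‖) := by
  have := norm_sub_le x (x - y)
  rw [sub_sub_cancel] at this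
  nlinarith [norm_nonneg x, norm_nonneg (x - y), mul_nonneg (norm_nonneg x) (norm_nonneg (x - y))]

lemma integrable_logWeight_mul (x : Plane) :
    Integrable fun y : Plane => logWeight y * (1 + ‖x - y‖) ^ (-5/2 : ℝ) := by
  have h1 := (integrable_one_add_norm_sub x (r := 9/4) (by norm_num)).const_mul
    (4 * (1 + ‖x‖) ^ (1/4 : ℝ))
  refine (integrable_nearLog.add h1).mono'
    (measurable_logWeight.mul (by fun_prop)).aestronglyMeasurable
    (Eventually.of_forall fun y => ?_)
  have hA : 0 < 1 + ‖x - y‖ := by positivity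
  have hw : 0 ≤ logWeight y := zero_le_one.trans (one_le_logWeight y)
  rw [Real.norm_of_nonneg (mul_nonneg hw (by positivity)), logWeight, add_mul]
  refine add_le_add ?_ ?_
  · refine mul_le_of_le_one_right (nearLog_nonneg y) ?_
    exact Real.rpow_le_one_of_one_le_of_nonpos (by linarith [norm_nonneg (x - y)]) (by norm_num)
  · have h2 : (1 + ‖y‖) ^ (1/4 : ℝ) ≤ (1 + ‖x‖) ^ (1/4 : ℝ) * (1 + ‖x - y‖) ^ (1/4 : ℝ) := by
      rw [← Real.mul_rpow (by positivity) (by positivity)]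
      exact Real.rpow_le_rpow (by positivity) (one_add_norm_le_mul x y) (by norm_num)
    calc 4 * (1 + ‖y‖) ^ (1/4 : ℝ) * (1 + ‖x - y‖) ^ (-5/2 : ℝ)
        ≤ 4 * ((1 + ‖x‖) ^ (1/4 : ℝ) * (1 + ‖x - y‖) ^ (1/4 : ℝ)) *
          (1 + ‖x - y‖) ^ (-5/2 : ℝ) := by gcongr
      _ = 4 * (1 + ‖x‖) ^ (1/4 : ℝ) *
          ((1 + ‖x - y‖) ^ (1/4 : ℝ) * (1 + ‖x - y‖) ^ (-5/2 : ℝ)) := by ring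
      _ = _ := by rw [← Real.rpow_add hA]; norm_num

/-- Smooth functions on the plane all of whose derivatives are `O((1 + ‖x‖) ^ (-5/2))`. -/
structure SmoothDecay {F : Type} [NormedAddCommGroup F] [NormedSpace ℝ F] (g : Plane → F) :
    Prop where
  contDiff : ContDiff ℝ (⊤ : ℕ∞) g
  bound : ∀ m : ℕ, ∃ C, ∀ x, ‖iteratedFDeriv ℝ m g x‖ ≤ C * (1 + ‖x‖) ^ (-5/2 : ℝ)

section SmoothDecay

variable {F G : Type} [NormedAddCommGroup F] [NormedSpace ℝ F] [NormedAddCommGroup G]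
  [NormedSpace ℝ G] {g : Plane → F}

lemma SmoothDecay.fderiv (hg : SmoothDecay g) : SmoothDecay (fderiv ℝ g) where
  contDiff := hg.contDiff.fderiv_right (by simp)
  bound m := by simpa only [norm_iteratedFDeriv_fderiv] using hg.bound (m + 1)

lemma SmoothDecay.clm_comp (L : F →L[ℝ] G) (hg : SmoothDecay g) :
    SmoothDecay fun x => L (g x) where
  contDiff := L.contDiff.comp hg.contDiff
  bound m := by
    obtain ⟨C, hC⟩ := hg.bound m
    refine ⟨‖L‖ * C, fun x => ?_⟩
    rw [mul_assoc]
    exact (L.norm_iteratedFDeriv_comp_left hg.contDiff.contDiffAt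
      (by exact_mod_cast le_top)).trans (by gcongr; exact hC x)

lemma SmoothDecay.norm_le (hg : SmoothDecay g) :
    ∃ C, 0 ≤ C ∧ ∀ x, ‖g x‖ ≤ C * (1 + ‖x‖) ^ (-5/2 : ℝ) := by
  obtain ⟨C, hC⟩ := hg.bound 0
  simp only [norm_iteratedFDeriv_zero] at hC
  refine ⟨C, ?_, hC⟩
  simpa using (norm_nonneg _).trans (hC 0)

lemma SmoothDecay.continuous (hg : SmoothDecay g) : Continuous g := hg.contDiff.continuous

lemma SmoothDecay.differentiable (hg : SmoothDecay g) : Differentiable ℝ g :=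
  hg.contDiff.differentiable (by simp)

lemma SmoothDecay.integrable (hg : SmoothDecay g) : Integrable g := by
  obtain ⟨C, -, hC⟩ := hg.norm_le
  have h := (integrable_one_add_norm (μ := (volume : Measure Plane)) (r := 5/2)
    (by rw [finrank_plane]; norm_num)).const_mul C
  refine h.mono' hg.continuous.aestronglyMeasurable (Eventually.of_forall fun y => ?_)
  simpa only [neg_div] using hC y

lemma SmoothDecay.integrable_smul (hg : SmoothDecay g) {φ : Plane → ℝ} (hφ : Measurable φ) {A : ℝ}
    (hA : ∀ y, |φ y| ≤ A * logWeight y) (x : Plane) : Integrable fun y => φ y • g (x - y) := by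
  obtain ⟨C, hC0, hC⟩ := hg.norm_le
  refine ((integrable_logWeight_mul x).const_mul (A * C)).mono'
    (hφ.aestronglyMeasurable.smul
      (hg.continuous.comp (continuous_const.sub continuous_id)).aestronglyMeasurable)
    (Eventually.of_forall fun y => ?_)
  rw [norm_smul, Real.norm_eq_abs]
  calc |φ y| * ‖g (x - y)‖ ≤ (A * logWeight y) * (C * (1 + ‖x - y‖) ^ (-5/2 : ℝ)) :=
        mul_le_mul (hA y) (hC _) (norm_nonneg _) ((abs_nonneg _).trans (hA y))
    _ = _ := by ring

lemma SmoothDecay.integrable_log_smul (hg : SmoothDecay g) (x : Plane) :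
    Integrable fun y : Plane => Real.log ‖y‖ • g (x - y) :=
  hg.integrable_smul (Real.measurable_log.comp measurable_norm) (A := 1)
    (fun y => by rw [one_mul]; exact abs_log_norm_le_logWeight y) x

lemma one_add_norm_rpow_le {x₀ x y : Plane} (h : x ∈ Metric.ball x₀ 1) :
    (1 + ‖x - y‖) ^ (-5/2 : ℝ) ≤ (2 : ℝ) ^ (5/2 : ℝ) * (1 + ‖x₀ - y‖) ^ (-5/2 : ℝ) := by
  have h1 : ‖x₀ - y‖ ≤ 1 + ‖x - y‖ := by
    rw [mem_ball_iff_norm, norm_sub_rev] at h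
    have := norm_add_le (x₀ - x) (x - y)
    rw [sub_add_sub_cancel] at this
    linarith
  have h2 : (1 + ‖x₀ - y‖) / 2 ≤ 1 + ‖x - y‖ := by linarith [norm_nonneg (x - y)]
  calc (1 + ‖x - y‖) ^ (-5/2 : ℝ) ≤ ((1 + ‖x₀ - y‖) / 2) ^ (-5/2 : ℝ) :=
        Real.rpow_le_rpow_of_nonpos (by positivity) h2 (by norm_num)
    _ = _ := by
        rw [Real.div_rpow (by positivity) (by norm_num), div_eq_mul_inv, mul_comm,
          ← Real.rpow_neg (by norm_num)]
        norm_num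

/-- Differentiation of the convolution with `log ‖·‖` under the integral sign. -/
lemma SmoothDecay.hasFDerivAt_integral_log_smul [CompleteSpace F] (hg : SmoothDecay g)
    (x₀ : Plane) :
    HasFDerivAt (fun x => ∫ y : Plane, Real.log ‖y‖ • g (x - y))
      (∫ y : Plane, Real.log ‖y‖ • _root_.fderiv ℝ g (x₀ - y)) x₀ := by
  obtain ⟨C, hC0, hC⟩ := hg.fderiv.norm_le
  refine hasFDerivAt_integral_of_dominated_of_fderiv_le
    (F' := fun x y => Real.log ‖y‖ • _root_.fderiv ℝ g (x - y))
    (bound := fun y => C * 2 ^ (5/2 : ℝ) * (logWeight y * (1 + ‖x₀ - y‖) ^ (-5/2 : ℝ)))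
    (Metric.ball_mem_nhds x₀ one_pos)
    (Eventually.of_forall fun x => (hg.integrable_log_smul x).aestronglyMeasurable)
    (hg.integrable_log_smul x₀) (hg.fderiv.integrable_log_smul x₀).aestronglyMeasurable
    (Eventually.of_forall fun y x hx => ?_) ((integrable_logWeight_mul x₀).const_mul _)
    (Eventually.of_forall fun y x _ => ?_)
  · rw [norm_smul, Real.norm_eq_abs]
    calc |Real.log ‖y‖| * ‖_root_.fderiv ℝ g (x - y)‖
        ≤ logWeight y * (C * (2 ^ (5/2 : ℝ) * (1 + ‖x₀ - y‖) ^ (-5/2 : ℝ))) := by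
          refine mul_le_mul (abs_log_norm_le_logWeight y) ((hC _).trans ?_) (norm_nonneg _)
            (zero_le_one.trans (one_le_logWeight y))
          gcongr
          exact one_add_norm_rpow_le hx
      _ = _ := by ring
  · have h := (hg.differentiable (x - y)).hasFDerivAt.comp x ((hasFDerivAt_id x).sub_const y)
    exact (h.const_smul (Real.log ‖y‖)).congr_fderiv (by ext; simp)

end SmoothDecay

lemma SmoothDecay.contDiff_nat_integral_log_smul (n : ℕ) :
    ∀ {F : Type} [NormedAddCommGroup F] [NormedSpace ℝ F] [CompleteSpace F] {g : Plane → F},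
      SmoothDecay g → ContDiff ℝ n fun x => ∫ y : Plane, Real.log ‖y‖ • g (x - y) := by
  induction n with
  | zero =>
    intro F _ _ _ g hg
    exact contDiff_zero.2 (continuous_iff_continuousAt.2 fun x =>
      (hg.hasFDerivAt_integral_log_smul x).continuousAt)
  | succ n ih =>
    intro F _ _ _ g hg
    rw [Nat.cast_add, Nat.cast_one, contDiff_succ_iff_hasFDerivAt]
    exact ⟨_, ih hg.fderiv, hg.hasFDerivAt_integral_log_smul⟩

lemma SmoothDecay.contDiff_integral_log_smul {F : Type} [NormedAddCommGroup F] [NormedSpace ℝ F]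
    [CompleteSpace F] {g : Plane → F} (hg : SmoothDecay g) :
    ContDiff ℝ (⊤ : ℕ∞) fun x => ∫ y : Plane, Real.log ‖y‖ • g (x - y) :=
  contDiff_infty.2 fun n => SmoothDecay.contDiff_nat_integral_log_smul n hg

section Laplacian

variable {g : Plane → ℝ}

lemma SmoothDecay.pd2 (hg : SmoothDecay g) (i : Fin 2) : SmoothDecay (pd2 i g) :=
  hg.fderiv.clm_comp (ContinuousLinearMap.apply ℝ ℝ (EuclideanSpace.single i (1 : ℝ)))

lemma SmoothDecay.pd2_integral_log_mul (hg : SmoothDecay g) (i : Fin 2) (c : ℝ) :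
    _root_.pd2 i (fun x => c * ∫ y : Plane, Real.log ‖y‖ * g (x - y)) =
      fun x => c * ∫ y : Plane, Real.log ‖y‖ * _root_.pd2 i g (x - y) := by
  ext x
  have h := (hg.hasFDerivAt_integral_log_smul x).const_mul c
  simp only [smul_eq_mul] at h
  rw [_root_.pd2, h.fderiv, _root_.smul_apply,
    ContinuousLinearMap.integral_apply (hg.fderiv.integrable_log_smul x)]
  rfl

/-- Integration by parts against a function of at most logarithmic size. -/
lemma SmoothDecay.integral_mul_pd2 (hg : SmoothDecay g) {φ : Plane → ℝ} (hφ : Differentiable ℝ φ)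
    {i : Fin 2} {A B : ℝ} (hA : ∀ y, |φ y| ≤ A * logWeight y)
    (hB : ∀ y, |_root_.pd2 i φ y| ≤ B * logWeight y) (x : Plane) :
    ∫ y, φ y * _root_.pd2 i g (x - y) = ∫ y, _root_.pd2 i φ y * g (x - y) := by
  have hd : ∀ y, HasFDerivAt (fun y => g (x - y)) (-_root_.fderiv ℝ g (x - y)) y := fun y =>
    ((hg.differentiable (x - y)).hasFDerivAt.comp y ((hasFDerivAt_id y).const_sub x)).congr_fderiv
      (by ext; simp)
  have he : ∀ y, _root_.fderiv ℝ (fun y => g (x - y)) y (EuclideanSpace.single i 1) =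
      -_root_.pd2 i g (x - y) := fun y => by rw [(hd y).fderiv]; rfl
  have h1 := hg.integrable_smul (measurable_fderiv_apply_const ℝ φ _) hB x
  have h2 := ((hg.pd2 i).integrable_smul hφ.continuous.measurable hA x).neg
  have h3 := hg.integrable_smul hφ.continuous.measurable hA x
  have key := integral_mul_fderiv_eq_neg_fderiv_mul_of_integrable (μ := volume) (f := φ)
    (g := fun y => g (x - y)) (v := EuclideanSpace.single i (1 : ℝ)) h1
    (h2.congr (Eventually.of_forall fun y => by simp [he])) h3
    (fun y _ => hφ y) (fun y _ => (hd y).differentiableAt)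
  simp only [he, mul_neg, integral_neg, neg_inj] at key
  exact key

/-- A smooth regularization of `log ‖y‖`. -/
def regLog (ε : ℝ) (y : Plane) : ℝ := Real.log (‖y‖ ^ 2 + ε) / 2

variable {ε : ℝ}

lemma regLog_eq (ε : ℝ) : regLog ε = fun y => Real.log (‖y‖ ^ 2 + ε) * 2⁻¹ := by
  ext y
  rw [regLog, div_eq_mul_inv]

lemma hasFDerivAt_norm_sq_add (ε : ℝ) (y : Plane) :
    HasFDerivAt (fun y : Plane => ‖y‖ ^ 2 + ε) (2 • innerSL ℝ y) y :=
  (hasStrictFDerivAt_norm_sq y).hasFDerivAt.add_const ε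

lemma differentiable_regLog (hε : 0 < ε) : Differentiable ℝ (regLog ε) := by
  intro y
  simp only [regLog_eq]
  exact ((hasFDerivAt_norm_sq_add ε y).log (by positivity)).differentiableAt.mul_const _

lemma pd2_regLog (hε : 0 < ε) (i : Fin 2) :
    pd2 i (regLog ε) = fun y => y i * (‖y‖ ^ 2 + ε)⁻¹ := by
  ext y
  have h := ((hasFDerivAt_norm_sq_add ε y).log (by positivity)).mul_const (2⁻¹ : ℝ)
  rw [pd2, regLog_eq, h.fderiv]
  simp [EuclideanSpace.inner_single_right]
  ring

lemma hasFDerivAt_pd2_regLog (hε : 0 < ε) (i : Fin 2) (y : Plane) :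
    HasFDerivAt (pd2 i (regLog ε))
      (y i • (-(((‖y‖ ^ 2 + ε) ^ 2)⁻¹ • (2 • innerSL ℝ y))) +
        (‖y‖ ^ 2 + ε)⁻¹ • (EuclideanSpace.proj i : Plane →L[ℝ] ℝ)) y := by
  rw [pd2_regLog hε]
  have hne : ‖y‖ ^ 2 + ε ≠ 0 := by positivity
  have h1 := (hasDerivAt_inv hne).comp_hasFDerivAt y (hasFDerivAt_norm_sq_add ε y)
  have h2 := ((EuclideanSpace.proj i : Plane →L[ℝ] ℝ).hasFDerivAt (x := y)).mul h1
  refine h2.congr_fderiv ?_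
  ext
  simp

lemma pd2_pd2_regLog (hε : 0 < ε) (i : Fin 2) :
    pd2 i (pd2 i (regLog ε)) =
      fun y => (‖y‖ ^ 2 + ε)⁻¹ - 2 * y i ^ 2 * ((‖y‖ ^ 2 + ε) ^ 2)⁻¹ := by
  ext y
  rw [pd2, (hasFDerivAt_pd2_regLog hε i y).fderiv]
  simp [EuclideanSpace.inner_single_right]
  ring

lemma laplacian_regLog (hε : 0 < ε) (y : Plane) :
    pd2 0 (pd2 0 (regLog ε)) y + pd2 1 (pd2 1 (regLog ε)) y = 2 * ε / (‖y‖ ^ 2 + ε) ^ 2 := by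
  have hne : ‖y‖ ^ 2 + ε ≠ 0 := by positivity
  have h : ‖y‖ ^ 2 = y 0 ^ 2 + y 1 ^ 2 := by
    rw [EuclideanSpace.real_norm_sq_eq, Fin.sum_univ_two]
  rw [pd2_pd2_regLog hε, pd2_pd2_regLog hε]
  field_simp
  rw [h]
  ring

lemma regLog_le (hε : 0 < ε) (hε1 : ε ≤ 1) (y : Plane) : regLog ε y ≤ logWeight y := by
  have h1 : Real.log (‖y‖ ^ 2 + ε) ≤ Real.log ((1 + ‖y‖) ^ 2) :=
    Real.log_le_log (by positivity) (by nlinarith [norm_nonneg y])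
  have h2 := log_le_four_mul_rpow (t := 1 + ‖y‖) (by positivity)
  rw [Real.log_pow, Nat.cast_ofNat] at h1
  unfold regLog logWeight
  linarith [nearLog_nonneg y]

lemma abs_regLog_le (hε : 0 < ε) (hε1 : ε ≤ 1) {y : Plane} (hy : y ≠ 0) :
    |regLog ε y| ≤ logWeight y := by
  refine abs_le.2 ⟨?_, regLog_le hε hε1 y⟩
  have hy' : 0 < ‖y‖ := norm_pos_iff.2 hy
  have h1 : Real.log (‖y‖ ^ 2) ≤ Real.log (‖y‖ ^ 2 + ε) :=
    Real.log_le_log (by positivity) (by linarith)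
  rw [Real.log_pow, Nat.cast_ofNat] at h1
  have h2 := (abs_le.1 (abs_log_norm_le_logWeight y)).1
  unfold regLog
  linarith

lemma abs_regLog_le_const_mul (hε : 0 < ε) (hε1 : ε ≤ 1) (y : Plane) :
    |regLog ε y| ≤ (1 + |Real.log ε|) * logWeight y := by
  have hw := one_le_logWeight y
  have h1 : Real.log ε ≤ Real.log (‖y‖ ^ 2 + ε) := Real.log_le_log hε (by nlinarith [norm_nonneg y])
  have h2 := regLog_le hε hε1 y
  have h3 := neg_abs_le (Real.log ε)
  have h4 := abs_nonneg (Real.log ε)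
  refine abs_le.2 ⟨?_, by nlinarith⟩
  unfold regLog
  nlinarith

lemma coord_sq_le_norm_sq (i : Fin 2) (y : Plane) : y i ^ 2 ≤ ‖y‖ ^ 2 := by
  rw [EuclideanSpace.real_norm_sq_eq]
  exact Finset.single_le_sum (f := fun j => y j ^ 2) (fun j _ => sq_nonneg _) (Finset.mem_univ i)

lemma abs_pd2_regLog_le (hε : 0 < ε) (hε1 : ε ≤ 1) (i : Fin 2) (y : Plane) :
    |pd2 i (regLog ε) y| ≤ ε⁻¹ * logWeight y := by
  have hpos : 0 < ‖y‖ ^ 2 + ε := by positivity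
  refine le_trans ?_ (le_mul_of_one_le_right (by positivity) (one_le_logWeight y))
  rw [pd2_regLog hε]
  simp only
  rw [abs_mul, abs_inv, abs_of_pos hpos, ← div_eq_mul_inv, div_le_iff₀ hpos, inv_mul_eq_div,
    le_div_iff₀ hε]
  have h1 := coord_sq_le_norm_sq i y
  rw [← sq_abs (y i)] at h1
  nlinarith [sq_nonneg (|y i| - ε), sq_nonneg (|y i| - 1), abs_nonneg (y i)]

lemma abs_pd2_pd2_regLog_le (hε : 0 < ε) (i : Fin 2) (y : Plane) :
    |pd2 i (pd2 i (regLog ε)) y| ≤ ε⁻¹ * logWeight y := by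
  have hpos : 0 < ‖y‖ ^ 2 + ε := by positivity
  refine le_trans ?_ (le_mul_of_one_le_right (by positivity) (one_le_logWeight y))
  rw [pd2_pd2_regLog hε]
  have h1 := coord_sq_le_norm_sq i y
  have h2 : (‖y‖ ^ 2 + ε)⁻¹ ≤ ε⁻¹ := inv_anti₀ hε (by nlinarith [norm_nonneg y])
  have h3 : y i ^ 2 * ((‖y‖ ^ 2 + ε) ^ 2)⁻¹ ≤ (‖y‖ ^ 2 + ε)⁻¹ := by
    rw [← div_eq_mul_inv, div_le_iff₀ (by positivity), pow_two (_ + _), inv_mul_cancel_left₀ hpos.ne']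
    linarith
  have h4 : 0 ≤ y i ^ 2 * ((‖y‖ ^ 2 + ε) ^ 2)⁻¹ := by positivity
  refine abs_le.2 ⟨?_, ?_⟩ <;> simp only <;> nlinarith

lemma SmoothDecay.integral_regLog_mul_pd2_pd2 (hg : SmoothDecay g) (hε : 0 < ε) (hε1 : ε ≤ 1)
    (i : Fin 2) (x : Plane) :
    ∫ y, regLog ε y * _root_.pd2 i (_root_.pd2 i g) (x - y) =
      ∫ y, _root_.pd2 i (_root_.pd2 i (regLog ε)) y * g (x - y) := by
  rw [(hg.pd2 i).integral_mul_pd2 (differentiable_regLog hε) (abs_regLog_le_const_mul hε hε1)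
      (abs_pd2_regLog_le hε hε1 i),
    hg.integral_mul_pd2 (fun y => (hasFDerivAt_pd2_regLog hε i y).differentiableAt)
      (abs_pd2_regLog_le hε hε1 i) (abs_pd2_pd2_regLog_le hε i)]

lemma SmoothDecay.integrable_pd2_pd2_regLog_mul (hg : SmoothDecay g) (hε : 0 < ε) (i : Fin 2)
    (x : Plane) : Integrable fun y => _root_.pd2 i (_root_.pd2 i (regLog ε)) y * g (x - y) :=
  hg.integrable_smul (measurable_fderiv_apply_const ℝ _ _) (abs_pd2_pd2_regLog_le hε i) x

lemma SmoothDecay.integral_regLog_mul_laplacian (hg : SmoothDecay g) (hε : 0 < ε) (hε1 : ε ≤ 1)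
    (x : Plane) :
    (∫ y, regLog ε y * _root_.pd2 0 (_root_.pd2 0 g) (x - y)) +
        ∫ y, regLog ε y * _root_.pd2 1 (_root_.pd2 1 g) (x - y) =
      ∫ y, 2 * ε / (‖y‖ ^ 2 + ε) ^ 2 * g (x - y) := by
  rw [hg.integral_regLog_mul_pd2_pd2 hε hε1, hg.integral_regLog_mul_pd2_pd2 hε hε1,
    ← integral_add (hg.integrable_pd2_pd2_regLog_mul hε 0 x)
      (hg.integrable_pd2_pd2_regLog_mul hε 1 x)]
  simp only [← add_mul, laplacian_regLog hε]

lemma SmoothDecay.tendsto_integral_regLog_mul (hg : SmoothDecay g) (x : Plane) {ε : ℝ → ℝ}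
    (hε : ∀ᶠ c in atTop, 0 < ε c ∧ ε c ≤ 1) (hlim : Tendsto ε atTop (nhds 0)) :
    Tendsto (fun c => ∫ y, regLog (ε c) y * g (x - y)) atTop
      (nhds (∫ y, Real.log ‖y‖ * g (x - y))) := by
  have hw : Integrable fun y => logWeight y * ‖g (x - y)‖ := by
    have := (hg.integrable_smul measurable_logWeight (A := 1) (fun y => by
      rw [one_mul, abs_of_nonneg (zero_le_one.trans (one_le_logWeight y))]) x).norm
    refine this.congr (Eventually.of_forall fun y => ?_)
    simp [abs_of_nonneg (zero_le_one.trans (one_le_logWeight y))]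
  have hne : ∀ᵐ y : Plane, y ≠ 0 := by simp [ae_iff]
  refine tendsto_integral_filter_of_dominated_convergence _ ?_ ?_ hw ?_
  · filter_upwards [hε] with c hc
    exact ((differentiable_regLog hc.1).continuous.mul
      (hg.continuous.comp (continuous_const.sub continuous_id))).aestronglyMeasurable
  · filter_upwards [hε] with c hc
    filter_upwards [hne] with y hy
    rw [norm_mul, Real.norm_eq_abs]
    gcongr
    exact abs_regLog_le hc.1 hc.2 hy
  · filter_upwards [hne] with y hy
    have hy' : ‖y‖ ^ 2 ≠ 0 := by positivity
    have h1 : Tendsto (fun c => ‖y‖ ^ 2 + ε c) atTop (nhds (‖y‖ ^ 2)) := by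
      simpa using hlim.const_add (‖y‖ ^ 2)
    have h2 := (h1.log hy').div_const 2
    rw [Real.log_pow, Nat.cast_ofNat, mul_div_cancel_left₀ _ two_ne_zero] at h2
    exact h2.mul_const _

lemma integral_Ioi_mul_inv_one_add_sq :
    ∫ r in Set.Ioi (0 : ℝ), r * ((1 + r ^ 2) ^ 2)⁻¹ = 1 / 2 := by
  have hd : ∀ r : ℝ, HasDerivAt (fun r : ℝ => -(1 + r ^ 2)⁻¹ / 2) (r * ((1 + r ^ 2) ^ 2)⁻¹) r := by
    intro r
    have hne : 1 + r ^ 2 ≠ 0 := by positivity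
    have h := ((((hasDerivAt_id r).pow 2).const_add 1).inv hne).neg.div_const 2
    refine h.congr_deriv ?_
    simp
    field_simp
  have hlim : Tendsto (fun r : ℝ => -(1 + r ^ 2)⁻¹ / 2) atTop (nhds 0) := by
    have h : Tendsto (fun r : ℝ => 1 + r ^ 2) atTop atTop :=
      tendsto_atTop_add_const_left _ _ (tendsto_pow_atTop two_ne_zero)
    simpa using h.inv_tendsto_atTop.neg.div_const 2
  rw [integral_Ioi_of_hasDerivAt_of_nonneg' (fun r _ => hd r)
    (fun r hr => mul_nonneg (le_of_lt hr) (by positivity)) hlim]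
  norm_num

/-- The normalized profile of the Laplacian of the regularized logarithm. -/
def poissonBump (y : Plane) : ℝ := π⁻¹ * ((1 + ‖y‖ ^ 2) ^ 2)⁻¹

lemma integral_poissonBump : ∫ y, poissonBump y = 1 := by
  unfold poissonBump
  rw [integral_fun_norm_addHaar volume fun r : ℝ => π⁻¹ * ((1 + r ^ 2) ^ 2)⁻¹]
  have h : ∀ r : ℝ, r ^ (Module.finrank ℝ Plane - 1) • (π⁻¹ * ((1 + r ^ 2) ^ 2)⁻¹) =
      π⁻¹ * (r * ((1 + r ^ 2) ^ 2)⁻¹) := fun r => by simp; ring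
  have hv : (volume : Measure Plane).real (Metric.ball 0 1) = π := by
    rw [measureReal_def, InnerProductSpace.volume_ball_of_dim_even (k := 1) (by simp)]
    simp [pi_nonneg]
  simp only [h]
  rw [integral_const_mul, integral_Ioi_mul_inv_one_add_sq, hv]
  simp

lemma tendsto_norm_pow_mul_poissonBump :
    Tendsto (fun y : Plane => ‖y‖ ^ Module.finrank ℝ Plane * poissonBump y)
      (Bornology.cobounded Plane) (nhds 0) := by
  have h : Tendsto (fun y : Plane => π⁻¹ * (‖y‖ ^ 2)⁻¹) (Bornology.cobounded Plane) (nhds 0) := by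
    have := ((tendsto_pow_atTop two_ne_zero).comp
      (tendsto_norm_cobounded_atTop (E := Plane))).inv_tendsto_atTop.const_mul π⁻¹
    simpa using this
  refine squeeze_zero (fun y => by unfold poissonBump; positivity) (fun y => ?_) h
  rcases eq_or_ne y 0 with rfl | hy
  · simp
  have hy' : 0 < ‖y‖ := norm_pos_iff.2 hy
  simp only [finrank_euclideanSpace, Fintype.card_fin, poissonBump]
  rw [mul_left_comm]
  gcongr
  rw [← div_eq_mul_inv, div_le_iff₀ (by positivity), inv_mul_eq_div, le_div_iff₀ (by positivity)]
  nlinarith [sq_nonneg ‖y‖]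

lemma SmoothDecay.integral_log_mul_laplacian (hg : SmoothDecay g) (x : Plane) :
    (∫ y : Plane, Real.log ‖y‖ * _root_.pd2 0 (_root_.pd2 0 g) (x - y)) +
        ∫ y : Plane, Real.log ‖y‖ * _root_.pd2 1 (_root_.pd2 1 g) (x - y) = 2 * π * g x := by
  have hε : ∀ᶠ c : ℝ in atTop, 0 < (c ^ 2)⁻¹ ∧ (c ^ 2)⁻¹ ≤ 1 := by
    filter_upwards [eventually_ge_atTop 1] with c hc
    exact ⟨by positivity, inv_le_one_of_one_le₀ (one_le_pow₀ hc)⟩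
  have hlim : Tendsto (fun c : ℝ => (c ^ 2)⁻¹) atTop (nhds 0) :=
    (tendsto_pow_atTop two_ne_zero).inv_tendsto_atTop
  have h1 := (((hg.pd2 0).pd2 0).tendsto_integral_regLog_mul x hε hlim).add
    (((hg.pd2 1).pd2 1).tendsto_integral_regLog_mul x hε hlim)
  have h2 := (tendsto_integral_comp_smul_smul_of_integrable' (μ := volume)
    (fun y => by unfold poissonBump; positivity) integral_poissonBump
    tendsto_norm_pow_mul_poissonBump hg.integrable
    (hg.continuous.continuousAt (x := x))).const_mul (2 * π)
  refine tendsto_nhds_unique h1 (h2.congr' ?_)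
  filter_upwards [hε, eventually_gt_atTop 0] with c hc hc0
  rw [hg.integral_regLog_mul_laplacian hc.1 hc.2, ← integral_const_mul,
    ← integral_sub_left_eq_self _ volume x]
  refine integral_congr_ae (Eventually.of_forall fun y => ?_)
  simp only [sub_sub_cancel, finrank_euclideanSpace, Fintype.card_fin, poissonBump, norm_smul,
    Real.norm_eq_abs, smul_eq_mul, abs_of_pos hc0]
  have h3 : 1 + (c * ‖y‖) ^ 2 ≠ 0 := by positivity
  have h4 : ‖y‖ ^ 2 + (c ^ 2)⁻¹ ≠ 0 := by positivity
  have h5 : ‖y‖ ^ 2 + (c ^ 2)⁻¹ = (1 + (c * ‖y‖) ^ 2) / c ^ 2 := by field_simp; ring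
  rw [h5]
  field_simp

end Laplacian

section Decay

/-- A singular power of the distance to the origin, cut off outside a ball. -/
def nearPow (w : Plane) : ℝ := (Set.Iic (1/2 : ℝ)).indicator (fun r => r ^ (-3/2 : ℝ)) ‖w‖

lemma nearPow_nonneg (w : Plane) : 0 ≤ nearPow w :=
  Set.indicator_apply_nonneg fun _ => Real.rpow_nonneg (norm_nonneg w) _

lemma integrable_nearPow : Integrable nearPow := by
  unfold nearPow
  rw [integrable_fun_norm_addHaar volume
    (f := (Set.Iic (1/2 : ℝ)).indicator fun r => r ^ (-3/2 : ℝ))]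
  have h1 : IntegrableOn (fun r : ℝ => r ^ (-1/2 : ℝ)) (Set.Ioo 0 1) :=
    (intervalIntegral.integrableOn_Ioo_rpow_iff one_pos).2 (by norm_num)
  have h2 : IntegrableOn ((Set.Ioo (0 : ℝ) 1).indicator fun r : ℝ => r ^ (-1/2 : ℝ))
      (Set.Ioi 0) := (h1.integrable_indicator measurableSet_Ioo).integrableOn
  refine Integrable.mono' h2 ?_ ?_
  · refine Measurable.aestronglyMeasurable ?_
    exact (measurable_id.pow_const _).smul
      ((measurable_id.pow_const _).indicator measurableSet_Iic)
  · refine (ae_restrict_iff' measurableSet_Ioi).2 (Eventually.of_forall fun r hr => ?_)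
    rw [Set.mem_Ioi] at hr
    by_cases h : r ≤ 1/2
    · have h3 : r < 1 := by linarith
      have h4 : r * r ^ (-3/2 : ℝ) = r ^ (-1/2 : ℝ) := by
        nth_rewrite 1 [← Real.rpow_one r]
        rw [← Real.rpow_add hr]
        norm_num
      rw [Set.indicator_of_mem (Set.mem_Iic.2 h), Set.indicator_of_mem (Set.mem_Ioo.2 ⟨hr, h3⟩),
        finrank_euclideanSpace, Fintype.card_fin, Nat.add_one_sub_one, pow_one, smul_eq_mul, h4,
        Real.norm_of_nonneg (by positivity)]
    · rw [Set.indicator_of_notMem (by simpa using h), smul_zero, norm_zero]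
      exact Set.indicator_nonneg (fun s hs => Real.rpow_nonneg hs.1.le _) r

lemma abs_log_le_two_mul {t : ℝ} (ht : 1/2 ≤ t) : |Real.log t| ≤ 2 * |t - 1| := by
  have ht0 : 0 < t := by linarith
  have h1 := Real.log_le_sub_one_of_pos ht0
  have h2 := Real.one_sub_inv_le_log_of_pos ht0
  have h3 := le_abs_self (t - 1)
  have h4 := neg_abs_le (t - 1)
  have h5 : -(2 * |t - 1|) ≤ 1 - t⁻¹ := by
    have : 1 - t⁻¹ = (t - 1) / t := by field_simp
    rw [this, le_div_iff₀ ht0]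
    rcases le_total 1 t with h | h
    · nlinarith [abs_nonneg (t - 1)]
    · rw [abs_of_nonpos (by linarith)]
      nlinarith
  exact abs_le.2 ⟨by linarith, by linarith [abs_nonneg (t - 1)]⟩

lemma abs_log_norm_sub_le {e w : Plane} (he : ‖e‖ = 1) (hw : ‖w‖ ≤ 1/2) :
    |Real.log ‖e - w‖| ≤ 2 * ‖w‖ := by
  have h1 : |‖e - w‖ - 1| ≤ ‖w‖ := by
    have := abs_norm_sub_norm_le (e - w) e
    rwa [he, sub_sub_cancel_left, norm_neg] at this
  have h2 := (abs_le.1 h1).1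
  exact (abs_log_le_two_mul (by linarith)).trans (by linarith)

/-- An integrable majorant of `|log ‖e - w‖| * ‖w‖ ^ (-5/2)` for unit vectors `e`, whose integral
does not depend on `e`. -/
def logMajorant (e w : Plane) : ℝ :=
  2 * nearPow w + ((1/2 : ℝ) ^ (-5/2 : ℝ) * nearLog (e - w) +
    4 * (3 : ℝ) ^ (5/2 : ℝ) * (1 + ‖w‖) ^ (-(9/4) : ℝ))

lemma integrable_one_add_norm_rpow : Integrable fun w : Plane => (1 + ‖w‖) ^ (-(9/4) : ℝ) :=
  integrable_one_add_norm (by rw [finrank_plane]; norm_num)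

lemma integrable_logMajorant (e : Plane) : Integrable (logMajorant e) :=
  (integrable_nearPow.const_mul _).add
    (((integrable_nearLog.comp_sub_left e).const_mul _).add
      (integrable_one_add_norm_rpow.const_mul _))

lemma integral_logMajorant (e : Plane) : ∫ w, logMajorant e w = ∫ w, logMajorant 0 w := by
  have h : ∀ e, ∫ w, logMajorant e w = 2 * (∫ w, nearPow w) +
      ((1/2 : ℝ) ^ (-5/2 : ℝ) * (∫ w, nearLog w) +
        4 * (3 : ℝ) ^ (5/2 : ℝ) * ∫ w : Plane, (1 + ‖w‖) ^ (-(9/4) : ℝ)) := fun e => by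
    have h1 := (integrable_nearLog.comp_sub_left e).const_mul ((1/2 : ℝ) ^ (-5/2 : ℝ))
    have h2 := integrable_one_add_norm_rpow.const_mul (4 * (3 : ℝ) ^ (5/2 : ℝ))
    have h3 : Integrable fun w => (1/2 : ℝ) ^ (-5/2 : ℝ) * nearLog (e - w) +
        4 * (3 : ℝ) ^ (5/2 : ℝ) * (1 + ‖w‖) ^ (-(9/4) : ℝ) := h1.add h2
    unfold logMajorant
    rw [integral_add (integrable_nearPow.const_mul _) h3, integral_add h1 h2]
    simp only [integral_const_mul, integral_sub_left_eq_self nearLog volume e]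
  rw [h, h]

lemma logMajorant_nonneg (e w : Plane) : 0 ≤ logMajorant e w := by
  have := nearPow_nonneg w
  have := nearLog_nonneg (e - w)
  unfold logMajorant
  positivity

lemma abs_log_mul_rpow_le_logMajorant {e w : Plane} (he : ‖e‖ = 1) (hw : w ≠ 0) :
    |Real.log ‖e - w‖| * ‖w‖ ^ (-5/2 : ℝ) ≤ logMajorant e w := by
  have hw0 : 0 < ‖w‖ := norm_pos_iff.2 hw
  have hP := nearPow_nonneg w
  have hL := nearLog_nonneg (e - w)
  by_cases h : ‖w‖ ≤ 1/2
  · have h1 : nearPow w = ‖w‖ ^ (-3/2 : ℝ) := Set.indicator_of_mem (Set.mem_Iic.2 h) _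
    have h2 : ‖w‖ * ‖w‖ ^ (-5/2 : ℝ) = ‖w‖ ^ (-3/2 : ℝ) := by
      nth_rewrite 1 [← Real.rpow_one ‖w‖]
      rw [← Real.rpow_add hw0]
      norm_num
    calc |Real.log ‖e - w‖| * ‖w‖ ^ (-5/2 : ℝ) ≤ 2 * ‖w‖ * ‖w‖ ^ (-5/2 : ℝ) := by
          gcongr
          exact abs_log_norm_sub_le he h
      _ = 2 * nearPow w := by rw [h1, mul_assoc, h2]
      _ ≤ _ := le_add_of_nonneg_right (by positivity)
  push Not at h
  refine le_trans ?_ (le_add_of_nonneg_left (by positivity))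
  by_cases h' : ‖e - w‖ < 1
  · have h1 : nearLog (e - w) = |Real.log ‖e - w‖| := Set.indicator_of_mem (Set.mem_Iio.2 h') _
    refine le_trans ?_ (le_add_of_nonneg_right (by positivity))
    rw [h1, mul_comm]
    gcongr ?_ * _
    exact Real.rpow_le_rpow_of_nonpos (by norm_num) h.le (by norm_num)
  · push Not at h'
    refine le_trans ?_ (le_add_of_nonneg_left (by positivity))
    have h1 : ‖e - w‖ ≤ 1 + ‖w‖ := (norm_sub_le e w).trans_eq (by rw [he])
    have h2 : |Real.log ‖e - w‖| ≤ 4 * (1 + ‖w‖) ^ (1/4 : ℝ) := by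
      rw [abs_of_nonneg (Real.log_nonneg h')]
      refine (log_le_four_mul_rpow (norm_nonneg _)).trans ?_
      gcongr
    have h3 : ‖w‖ ^ (-5/2 : ℝ) ≤ (3 : ℝ) ^ (5/2 : ℝ) * (1 + ‖w‖) ^ (-5/2 : ℝ) := by
      calc ‖w‖ ^ (-5/2 : ℝ) ≤ ((1 + ‖w‖) / 3) ^ (-5/2 : ℝ) :=
            Real.rpow_le_rpow_of_nonpos (by positivity) (by linarith) (by norm_num)
        _ = _ := by
            rw [Real.div_rpow (by positivity) (by norm_num), div_eq_mul_inv, mul_comm,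
              ← Real.rpow_neg (by norm_num)]
            norm_num
    calc |Real.log ‖e - w‖| * ‖w‖ ^ (-5/2 : ℝ)
        ≤ (4 * (1 + ‖w‖) ^ (1/4 : ℝ)) * ((3 : ℝ) ^ (5/2 : ℝ) * (1 + ‖w‖) ^ (-5/2 : ℝ)) := by
          gcongr
      _ = 4 * (3 : ℝ) ^ (5/2 : ℝ) * ((1 + ‖w‖) ^ (1/4 : ℝ) * (1 + ‖w‖) ^ (-5/2 : ℝ)) := by ring
      _ = _ := by
          rw [← Real.rpow_add (by positivity)]
          norm_num

lemma log_norm_sub_sub_log {x y : Plane} (hx : x ≠ 0) (hxy : y ≠ x) :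
    Real.log ‖x - y‖ - Real.log ‖x‖ = Real.log ‖‖x‖⁻¹ • x - ‖x‖⁻¹ • y‖ := by
  have h1 : ‖x‖ ≠ 0 := norm_ne_zero_iff.2 hx
  have h2 : ‖x - y‖ ≠ 0 := norm_ne_zero_iff.2 (sub_ne_zero.2 hxy.symm)
  rw [← smul_sub, norm_smul, norm_inv, norm_norm, Real.log_mul (inv_ne_zero h1) h2, Real.log_inv]
  ring

/-- Pointwise estimate for the recentred integrand of the logarithmic potential. -/
lemma abs_log_sub_mul_le {f : Plane → ℝ} {δ M : ℝ} (hM : 0 < M)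
    (hf : ∀ y, M ≤ ‖y‖ → |f y| ≤ δ * ‖y‖ ^ (-5/2 : ℝ)) (hδ : 0 ≤ δ) {x y : Plane}
    (hx : 2 * M ≤ ‖x‖) (hxy : y ≠ x) :
    |(Real.log ‖x - y‖ - Real.log ‖x‖) * f y| ≤
      2 * ‖x‖⁻¹ * (Metric.ball 0 M).indicator (fun y => ‖y‖ * |f y|) y +
        δ * ‖x‖ ^ (-5/2 : ℝ) * logMajorant (‖x‖⁻¹ • x) (‖x‖⁻¹ • y) := by
  have hx0 : 0 < ‖x‖ := by linarith
  have he : ‖‖x‖⁻¹ • x‖ = 1 := by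
    rw [norm_smul, norm_inv, norm_norm, inv_mul_cancel₀ hx0.ne']
  have hw : ‖‖x‖⁻¹ • y‖ = ‖x‖⁻¹ * ‖y‖ := by rw [norm_smul, norm_inv, norm_norm]
  have hmaj := logMajorant_nonneg (‖x‖⁻¹ • x) (‖x‖⁻¹ • y)
  rw [log_norm_sub_sub_log (norm_pos_iff.1 hx0) hxy, abs_mul]
  by_cases hy : ‖y‖ < M
  · refine le_trans ?_ (le_add_of_nonneg_right (by positivity))
    rw [Set.indicator_of_mem (by simpa using hy)]
    have h1 := abs_log_norm_sub_le he (w := ‖x‖⁻¹ • y) (by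
      rw [hw, inv_mul_eq_div, div_le_iff₀ hx0]; linarith)
    rw [hw] at h1
    calc _ ≤ 2 * (‖x‖⁻¹ * ‖y‖) * |f y| := by gcongr
      _ = _ := by ring
  · rw [Set.indicator_of_notMem (by simpa using hy), mul_zero, zero_add]
    push Not at hy
    have hy0 : 0 < ‖y‖ := by linarith
    have h1 := abs_log_mul_rpow_le_logMajorant he (w := ‖x‖⁻¹ • y)
      (smul_ne_zero (inv_ne_zero hx0.ne') (norm_pos_iff.1 hy0))
    have h2 : ‖y‖ ^ (-5/2 : ℝ) = ‖x‖ ^ (-5/2 : ℝ) * ‖‖x‖⁻¹ • y‖ ^ (-5/2 : ℝ) := by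
      rw [hw, ← Real.mul_rpow hx0.le (by positivity), mul_inv_cancel_left₀ hx0.ne']
    calc _ ≤ |Real.log ‖‖x‖⁻¹ • x - ‖x‖⁻¹ • y‖| * (δ * ‖y‖ ^ (-5/2 : ℝ)) := by
          gcongr
          exact hf y hy
      _ = δ * ‖x‖ ^ (-5/2 : ℝ) *
          (|Real.log ‖‖x‖⁻¹ • x - ‖x‖⁻¹ • y‖| * ‖‖x‖⁻¹ • y‖ ^ (-5/2 : ℝ)) := by rw [h2]; ring
      _ ≤ _ := by gcongr

lemma abs_integral_log_mul_le {f : Plane → ℝ} (hfc : Continuous f) (hfi : Integrable f)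
    (hint : ∀ x, Integrable fun y => Real.log ‖x - y‖ * f y) (hfzero : ∫ x, f x = 0)
    {δ M : ℝ} (hM : 0 < M) (hf : ∀ y, M ≤ ‖y‖ → |f y| ≤ δ * ‖y‖ ^ (-5/2 : ℝ)) (hδ : 0 ≤ δ)
    {x : Plane} (hx : 2 * M ≤ ‖x‖) :
    |∫ y, Real.log ‖x - y‖ * f y| ≤
      2 * (∫ y in Metric.ball 0 M, ‖y‖ * |f y|) * ‖x‖⁻¹ +
        δ * (∫ w, logMajorant 0 w) * ‖x‖ ^ (-1/2 : ℝ) := by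
  have hx0 : 0 < ‖x‖ := by linarith
  have hball : IntegrableOn (fun y : Plane => ‖y‖ * |f y|) (Metric.ball 0 M) :=
    ((continuous_norm.mul hfc.abs).continuousOn.integrableOn_compact
      (isCompact_closedBall (0 : Plane) M)).mono_set Metric.ball_subset_closedBall
  have hi1 := (hball.integrable_indicator Metric.isOpen_ball.measurableSet).const_mul (2 * ‖x‖⁻¹)
  have hi2 := ((integrable_logMajorant (‖x‖⁻¹ • x)).comp_smul (inv_ne_zero hx0.ne')).const_mul
    (δ * ‖x‖ ^ (-5/2 : ℝ))
  have hshift : ∫ y, Real.log ‖x - y‖ * f y =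
      ∫ y, (Real.log ‖x - y‖ - Real.log ‖x‖) * f y := by
    simp only [sub_mul]
    rw [integral_sub (hint x) (hfi.const_mul _), integral_const_mul, hfzero, mul_zero, sub_zero]
  have hne : ∀ᵐ y : Plane, y ≠ x := by simp [ae_iff]
  have hpow : ‖x‖ ^ (-5/2 : ℝ) * ‖x‖ ^ 2 = ‖x‖ ^ (-1/2 : ℝ) := by
    rw [← Real.rpow_natCast, ← Real.rpow_add hx0]
    norm_num
  rw [hshift, ← Real.norm_eq_abs]
  refine (norm_integral_le_of_norm_le (hi1.add hi2)
    (hne.mono fun y hy => abs_log_sub_mul_le hM hf hδ hx hy)).trans_eq ?_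
  rw [integral_add' hi1 hi2, integral_const_mul, integral_const_mul,
    integral_indicator Metric.isOpen_ball.measurableSet,
    Measure.integral_comp_inv_smul_of_nonneg volume _ hx0.le, integral_logMajorant,
    finrank_euclideanSpace, Fintype.card_fin, smul_eq_mul, ← hpow]
  ring

end Decay

lemma logPotential_eq (f : Plane → ℝ) :
    logPotential f = fun x => (2 * π)⁻¹ * ∫ y : Plane, Real.log ‖y‖ * f (x - y) := by
  ext x
  rw [logPotential, ← integral_sub_left_eq_self _ volume x]
  simp only [sub_sub_cancel]

lemma smoothDecay_of_isLittleO {f : Plane → ℝ} (hfsmooth : ContDiff ℝ (⊤ : ℕ∞) f)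
    (hfdecay : ∀ m : ℕ, (fun x => ‖iteratedFDeriv ℝ m f x‖) =o[cocompact Plane]
      fun x => ‖x‖ ^ ((-5/2 : ℝ) - m)) : SmoothDecay f where
  contDiff := hfsmooth
  bound m := by
    have hc : Continuous (iteratedFDeriv ℝ m f) :=
      hfsmooth.continuous_iteratedFDeriv (by exact_mod_cast le_top)
    have h1 := (hfdecay m).def one_pos
    rw [← Metric.cobounded_eq_cocompact, ← comap_norm_atTop] at h1
    obtain ⟨R, -, hR⟩ := (atTop_basis.comap (norm : Plane → ℝ)).eventually_iff.1 h1
    set R' := max R 1 with hR'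
    obtain ⟨K, hK⟩ := (isCompact_closedBall (0 : Plane) R').exists_bound_of_continuousOn
      hc.continuousOn
    have hR1 : 1 ≤ R' := le_max_right _ _
    have hK0 : 0 ≤ K := (norm_nonneg _).trans (hK 0 (by simp; linarith))
    refine ⟨K * (1 + R') ^ (5/2 : ℝ) + 2 ^ (5/2 : ℝ), fun x => ?_⟩
    have hx := norm_nonneg x
    rcases le_or_gt ‖x‖ R' with h | h
    · have h2 : 1 ≤ (1 + R') ^ (5/2 : ℝ) * (1 + ‖x‖) ^ (-5/2 : ℝ) := by
        rw [neg_div, Real.rpow_neg (by positivity), ← div_eq_mul_inv,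
          one_le_div (by positivity)]
        gcongr
      calc ‖iteratedFDeriv ℝ m f x‖ ≤ K * 1 := by simpa using hK x (by simpa using h)
        _ ≤ K * ((1 + R') ^ (5/2 : ℝ) * (1 + ‖x‖) ^ (-5/2 : ℝ)) := by gcongr
        _ = K * (1 + R') ^ (5/2 : ℝ) * (1 + ‖x‖) ^ (-5/2 : ℝ) := by ring
        _ ≤ _ := by
            gcongr
            exact le_add_of_nonneg_right (by positivity)
    · have h3 : 1 ≤ ‖x‖ := by linarith
      have h2 := hR (show ‖x‖ ∈ Set.Ici R from ((le_max_left R 1).trans h.le))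
      rw [norm_norm, one_mul, Real.norm_of_nonneg (by positivity)] at h2
      calc ‖iteratedFDeriv ℝ m f x‖ ≤ ‖x‖ ^ ((-5/2 : ℝ) - m) := h2
        _ ≤ ‖x‖ ^ (-5/2 : ℝ) := Real.rpow_le_rpow_of_exponent_le h3 (by simp)
        _ ≤ ((1 + ‖x‖) / 2) ^ (-5/2 : ℝ) :=
            Real.rpow_le_rpow_of_nonpos (by positivity) (by linarith) (by norm_num)
        _ = 2 ^ (5/2 : ℝ) * (1 + ‖x‖) ^ (-5/2 : ℝ) := by
            rw [Real.div_rpow (by positivity) (by norm_num), div_eq_mul_inv, mul_comm,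
              ← Real.rpow_neg (by norm_num)]
            norm_num
        _ ≤ _ := by
            gcongr
            exact le_add_of_nonneg_left (by positivity)

lemma logPotential_isLittleO {f : Plane → ℝ} (hfc : Continuous f) (hfi : Integrable f)
    (hint : ∀ x, Integrable fun y => Real.log ‖x - y‖ * f y) (hfzero : ∫ x, f x = 0)
    (hdecay : f =o[cocompact Plane] fun x => ‖x‖ ^ (-5/2 : ℝ)) :
    logPotential f =o[cocompact Plane] fun x => ‖x‖ ^ (-1/2 : ℝ) := by
  have hnorm : Tendsto (norm : Plane → ℝ) (cocompact Plane) atTop := tendsto_norm_cocompact_atTop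
  suffices h : (fun x => ∫ y, Real.log ‖x - y‖ * f y) =o[cocompact Plane]
      fun x => ‖x‖ ^ (-1/2 : ℝ) from h.const_mul_left _
  set A := ∫ w, logMajorant 0 w with hA
  have hA0 : 0 ≤ A := integral_nonneg (logMajorant_nonneg 0)
  refine isLittleO_iff.2 fun c hc => ?_
  have hδ : 0 < c / (2 * (A + 1)) := by positivity
  have h1 := hdecay.def hδ
  rw [← Metric.cobounded_eq_cocompact, ← comap_norm_atTop] at h1
  obtain ⟨R, -, hR⟩ := (atTop_basis.comap (norm : Plane → ℝ)).eventually_iff.1 h1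
  set M := max R 1 with hM
  have hM0 : 0 < M := one_pos.trans_le (le_max_right _ _)
  have hf : ∀ y : Plane, M ≤ ‖y‖ → |f y| ≤ c / (2 * (A + 1)) * ‖y‖ ^ (-5/2 : ℝ) := fun y hy => by
    have := hR (show ‖y‖ ∈ Set.Ici R from (le_max_left R 1).trans hy)
    rwa [Real.norm_eq_abs, Real.norm_of_nonneg (by positivity)] at this
  set K := ∫ y in Metric.ball (0 : Plane) M, ‖y‖ * |f y| with hK
  have hlim : Tendsto (fun x : Plane => 2 * K * ‖x‖ ^ (-(1/2) : ℝ)) (cocompact Plane) (nhds 0) := by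
    simpa using ((tendsto_rpow_neg_atTop (y := 1/2) (by norm_num)).comp hnorm).const_mul (2 * K)
  filter_upwards [hnorm.eventually_ge_atTop (2 * M), hlim.eventually_le_const (half_pos hc)]
    with x hx hxK
  have hx0 : 0 < ‖x‖ := by linarith
  have h2 := abs_integral_log_mul_le hfc hfi hint hfzero hM0 hf hδ.le hx
  have hinv : ‖x‖⁻¹ = ‖x‖ ^ (-(1/2) : ℝ) * ‖x‖ ^ (-1/2 : ℝ) := by
    rw [← Real.rpow_add hx0, ← Real.rpow_neg_one]
    norm_num
  have hA1 : c / (2 * (A + 1)) * A ≤ c / 2 := by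
    rw [div_mul_eq_mul_div, div_le_div_iff₀ (by positivity) two_pos]
    nlinarith
  rw [Real.norm_eq_abs, Real.norm_of_nonneg (by positivity)]
  calc _ ≤ 2 * K * ‖x‖⁻¹ + c / (2 * (A + 1)) * A * ‖x‖ ^ (-1/2 : ℝ) := h2
    _ = 2 * K * ‖x‖ ^ (-(1/2) : ℝ) * ‖x‖ ^ (-1/2 : ℝ) +
        c / (2 * (A + 1)) * A * ‖x‖ ^ (-1/2 : ℝ) := by rw [hinv]; ring
    _ ≤ c / 2 * ‖x‖ ^ (-1/2 : ℝ) + c / 2 * ‖x‖ ^ (-1/2 : ℝ) := by gcongr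
    _ = c * ‖x‖ ^ (-1/2 : ℝ) := by ring

theorem stmt13
    (f : EuclideanSpace ℝ (Fin 2) → ℝ)
    (hfsmooth : ContDiff ℝ (⊤ : ℕ∞) f)
    (hfdecay : ∀ m : ℕ,
      (fun x => ‖iteratedFDeriv ℝ m f x‖)
        =o[cocompact (EuclideanSpace ℝ (Fin 2))] fun x => ‖x‖ ^ ((-5/2 : ℝ) - m))
    (hfzero : ∫ x, f x = 0) :
    (∀ x, Integrable fun y => Real.log ‖x - y‖ * f y) ∧
    ContDiff ℝ (⊤ : ℕ∞) (logPotential f) ∧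
    (∀ x, pd2 0 (pd2 0 (logPotential f)) x + pd2 1 (pd2 1 (logPotential f)) x = f x) ∧
    ((fun x => logPotential f x)
      =o[cocompact (EuclideanSpace ℝ (Fin 2))] fun x => ‖x‖ ^ (-1/2 : ℝ)) := by
  have hf := smoothDecay_of_isLittleO hfsmooth hfdecay
  have hint : ∀ x, Integrable fun y => Real.log ‖x - y‖ * f y := fun x => by
    simpa using (hf.integrable_log_smul x).comp_sub_left x
  have hdecay : f =o[cocompact Plane] fun x => ‖x‖ ^ (-5/2 : ℝ) := by
    simpa [isLittleO_norm_left] using hfdecay 0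
  refine ⟨hint, ?_, fun x => ?_,
    logPotential_isLittleO hf.continuous hf.integrable hint hfzero hdecay⟩
  · rw [logPotential_eq]
    exact contDiff_const.mul hf.contDiff_integral_log_smul
  · rw [logPotential_eq, hf.pd2_integral_log_mul, hf.pd2_integral_log_mul,
      (hf.pd2 0).pd2_integral_log_mul, (hf.pd2 1).pd2_integral_log_mul, ← mul_add,
      hf.integral_log_mul_laplacian, inv_mul_cancel_left₀ (by positivity)]

end
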